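/- arXiv:0903.2508 — 2 statements merged into one kernel-verified Lean document; each statement's English description precedes it below -/
import Mathlib

section
/- For every integer d ≥ 2, every subset A ⊆ F_q, every index i with 1 ≤ i ≤ d, and every tuple (y_i, y_{i+1}, …, y_d) ∈ F_q^{d−i+1} with y_i ≠ 0, one has g(0, …, 0, y_i, y_{i+1}, …, y_d) ≤ N_{d−1}(A; (−1)^i y_i). -/
/-! The vector of signed maximal minors of an `e × (e + 1)` matrix `M` lies in the kernel of `M`
(`sum_mul_vmat`): each coordinate of the product is, up to sign, the Laplace expansion of a
determinant with a repeated row. Hence if `vmat M = x` with `x i ≠ 0`, column `i` of `M` is a linear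
combination of the other columns with coefficients depending only on `x`. Deleting column `i` is
thus injective on the matrices counted by `gcount`, and the resulting square matrix has determinant
`(-1) ^ (i + 1) * x i`. -/

/-- `matCount F d A t` is the number of `d × d` matrices over `F` all of whose entries
lie in `A` and whose determinant equals `t`. -/
noncomputable def matCount (F : Type) [CommRing F] [Fintype F] (d : ℕ) (A : Finset F) (t : F) : ℕ :=
  Nat.card {M : Matrix (Fin d) (Fin d) F // (∀ i j, M i j ∈ A) ∧ M.det = t}

/-- For a `(d-1) × d` matrix `M` (here `d = e + 1`), `vmat M` is the vector whose `i`-th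
coordinate is `(-1)^(i+1)` times the determinant of the minor of `M` obtained by deleting
the `i`-th column (indices `0`-based, corresponding to `(-1)^i det M_i` with `1`-based `i`). -/
def vmat {F : Type} [CommRing F] {e : ℕ} (M : Matrix (Fin e) (Fin (e + 1)) F) :
    Fin (e + 1) → F :=
  fun i => (-1 : F) ^ ((i : ℕ) + 1) * (M.submatrix id i.succAbove).det

/-- `gcount F e A x` is the number of `(d-1) × d` matrices `M` (with `d = e + 1`) over `F`
with all entries in `A` such that `vmat M = x`. -/
noncomputable def gcount (F : Type) [CommRing F] [Fintype F] (e : ℕ) (A : Finset F)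
    (x : Fin (e + 1) → F) : ℕ :=
  Nat.card {M : Matrix (Fin e) (Fin (e + 1)) F // (∀ i j, M i j ∈ A) ∧ vmat M = x}

theorem sum_mul_vmat {F : Type} [CommRing F] {e : ℕ} (M : Matrix (Fin e) (Fin (e + 1)) F)
    (r : Fin e) : ∑ j, M r j * vmat M j = 0 := by
  -- Prepending a copy of row `r` to `M` gives a square matrix with two equal rows.
  have h : (Matrix.of (Fin.cons (M r) M : Fin (e + 1) → Fin (e + 1) → F)).det = 0 := by
    apply Matrix.det_zero_of_row_eq (i := 0) (j := r.succ) (Fin.succ_ne_zero r).symm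
    rfl
  rw [Matrix.det_succ_row_zero] at h
  rw [← neg_eq_zero, ← Finset.sum_neg_distrib, ← h]
  refine Finset.sum_congr rfl fun j _ => ?_
  have hs : (Matrix.of (Fin.cons (M r) M : Fin (e + 1) → Fin (e + 1) → F)).submatrix Fin.succ
      j.succAbove = M.submatrix id j.succAbove := by
    rfl
  rw [hs]
  change -(M r j * ((-1) ^ ((j : ℕ) + 1) * _)) = (-1) ^ (j : ℕ) * M r j * _
  ring

/-- Statement 4, with `d = e + 1 ≥ 2` and the index `i : Fin (e + 1)` corresponding to the
`1`-based index `i + 1 ∈ {1, …, d}`; a tuple `(0, …, 0, y_i, …, y_d)` with `y_i ≠ 0` is a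
vector `x` vanishing at coordinates before `i` and nonzero at `i`. -/
theorem stmt_4 (F : Type) [Field F] [Fintype F]
    (hq : Odd (Fintype.card F)) (e : ℕ) (he : 1 ≤ e) (A : Finset F) (i : Fin (e + 1))
    (x : Fin (e + 1) → F) (h0 : ∀ j, j < i → x j = 0) (hx : x i ≠ 0) :
    gcount F e A x ≤ matCount F e A ((-1 : F) ^ ((i : ℕ) + 1) * x i) := by
  unfold gcount matCount
  refine Nat.card_le_card_of_injective
    (fun M => ⟨M.1.submatrix id i.succAbove, fun a b => M.2.1 _ _, ?_⟩) ?_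
  · have hi : (-1 : F) ^ ((i : ℕ) + 1) * (M.1.submatrix id i.succAbove).det = x i :=
      congrFun M.2.2 i
    rw [← hi, ← mul_assoc, ← mul_pow]
    simp
  · rintro ⟨M, hM, hMx⟩ ⟨N, hN, hNx⟩ h
    have hs : ∀ a b, M a (i.succAbove b) = N a (i.succAbove b) := fun a b =>
      congrFun (congrFun (congrArg Subtype.val h) a) b
    rw [Subtype.mk.injEq]
    ext a j
    refine Fin.succAboveCases i ?_ (fun b => hs a b) j
    have h1 := sum_mul_vmat M a
    have h2 := sum_mul_vmat N a
    rw [hMx, Fin.sum_univ_succAbove _ i] at h1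
    rw [hNx, Fin.sum_univ_succAbove _ i] at h2
    simp only [hs] at h1
    exact mul_right_cancel₀ hx (add_right_cancel (h1.trans h2.symm))
end

section
/- For every integer d ≥ 2 and every subset A ⊆ F_q, one has Σ_{x ∈ F_q^d, x ≠ (0,…,0)} g(x)² ≤ (Σ_{i=0}^{d−1} |A|^i) · Σ_{l ∈ F_q, l ≠ 0} N_{d−1}(A;l)². -/
/-- The sum of squared fibre sizes of `f` over nonzero values counts colliding pairs. -/
lemma sum_card_fiber_sq {α β : Type} [Fintype α] [DecidableEq α] [Fintype β] [DecidableEq β]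
    [Zero β] (s : Finset α) (f : α → β) :
    ∑ b ∈ Finset.univ.filter (fun b : β => b ≠ 0), (s.filter (fun a => f a = b)).card ^ 2 =
      ((s ×ˢ s).filter (fun p => f p.1 = f p.2 ∧ f p.1 ≠ 0)).card := by
  rw [Finset.card_eq_sum_card_fiberwise (f := fun p => f p.1)
    (t := Finset.univ.filter (fun b : β => b ≠ 0))]
  · refine Finset.sum_congr rfl fun b hb => ?_
    rw [sq, ← Finset.card_product]
    congr 1
    ext ⟨a, a'⟩
    simp only [Finset.mem_filter, Finset.mem_product, Finset.mem_univ, true_and] at hb ⊢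
    constructor
    · rintro ⟨⟨h1, h2⟩, h3, h4⟩
      exact ⟨⟨⟨h1, h3⟩, by rw [h2, h4], by rwa [h2]⟩, h2⟩
    · rintro ⟨⟨⟨h1, h3⟩, h5, -⟩, h2⟩
      exact ⟨⟨h1, h2⟩, h3, by rw [← h5, h2]⟩
  · intro p hp
    simp at hp ⊢
    exact hp.2.2

/-- The vector of signed maximal minors of `M` is orthogonal to every row of `M`: the
pairing with row `r` is, up to sign, the determinant of `M` with row `r` repeated on top. -/
lemma mulVec_vmat {F : Type} [Field F] {e : ℕ} (M : Matrix (Fin e) (Fin (e + 1)) F) :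
    M.mulVec (vmat M) = 0 := by
  funext r
  have h0 : (Matrix.of (Fin.cons (M r) M) : Matrix (Fin (e + 1)) (Fin (e + 1)) F).det = 0 := by
    refine Matrix.det_zero_of_row_eq (i := 0) (j := r.succ) (Fin.succ_ne_zero r).symm ?_
    rfl
  rw [Matrix.det_succ_row_zero] at h0
  simp only [Matrix.mulVec, dotProduct, vmat, Pi.zero_apply]
  rw [← neg_eq_zero, ← h0, ← Finset.sum_neg_distrib]
  refine Finset.sum_congr rfl fun j _ => ?_
  have : (Matrix.of (Fin.cons (M r) M) : Matrix (Fin (e + 1)) (Fin (e + 1)) F).submatrix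
      Fin.succ j.succAbove = M.submatrix id j.succAbove := by
    rfl
  rw [this]
  change -(M r j * ((-1) ^ ((j : ℕ) + 1) * (M.submatrix id j.succAbove).det)) =
    (-1) ^ (j : ℕ) * M r j * (M.submatrix id j.succAbove).det
  ring

/-- The relation `M (vmat M) = 0` with column `i` separated from the others. -/
lemma column_relation {F : Type} [Field F] {e : ℕ} (M : Matrix (Fin e) (Fin (e + 1)) F)
    (i : Fin (e + 1)) (r : Fin e) :
    vmat M i * M r i + ∑ j, vmat M (i.succAbove j) * M r (i.succAbove j) = 0 := by
  have h := congrFun (mulVec_vmat M) r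
  simp only [Matrix.mulVec, dotProduct, Pi.zero_apply] at h
  rw [Fin.sum_univ_succAbove _ i] at h
  simpa only [mul_comm] using h

/-- A subspace of dimension at most `k` contains at most `|A|^k` vectors with entries in `A`. -/
lemma card_filter_mem_le {F : Type} [Field F] [Fintype F] [DecidableEq F] {e k : ℕ}
    (A : Finset F) (hA : A.Nonempty) (W : Submodule F (Fin e → F))
    (hW : Module.finrank F W ≤ k) (s : Finset (Fin e → F))
    (hs : ∀ w ∈ s, w ∈ W ∧ ∀ i, w i ∈ A) : s.card ≤ A.card ^ k := by
  classical
  let φ : Fin e → Module.Dual F W := fun i => (LinearMap.proj i).comp W.subtype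
  obtain ⟨b, hb, hspan, hli⟩ := exists_linearIndependent F (Set.range φ)
  have hbf : b.Finite := (Set.finite_range φ).subset hb
  have : Fintype b := hbf.fintype
  have hcard : Fintype.card b ≤ k := by
    refine (hli.fintype_card_le_finrank).trans ?_
    rw [Subspace.dual_finrank_eq]
    exact hW
  have hchoose : ∀ f : b, ∃ i, φ i = f.1 := fun f => hb f.2
  choose c hc using hchoose
  calc s.card ≤ (Fintype.piFinset (fun _ : b => A)).card := by
        refine Finset.card_le_card_of_injOn (fun w f => w (c f)) ?_ ?_
        · intro w hw
          simp only [Finset.mem_coe, Fintype.mem_piFinset]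
          exact fun f => (hs w hw).2 _
        · intro w hw w' hw' heq
          have hsub : b ⊆ {g : Module.Dual F W |
              g ⟨w, (hs w hw).1⟩ = g ⟨w', (hs w' hw').1⟩} := by
            intro g hg
            have h1 := congrFun heq ⟨g, hg⟩
            have h2 := hc ⟨g, hg⟩
            simp only at h1 h2
            simp only [Set.mem_ofPred_eq]
            rw [← h2]
            exact h1
          funext i
          have hi : φ i ∈ Submodule.span F b := by
            rw [hspan]
            exact Submodule.subset_span ⟨i, rfl⟩
          have : φ i ⟨w, (hs w hw).1⟩ = φ i ⟨w', (hs w' hw').1⟩ := by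
            generalize φ i = f at hi
            induction hi using Submodule.span_induction with
            | mem g hg => exact hsub hg
            | zero => rfl
            | add g h _ _ hg hh => simp [hg, hh]
            | smul a g _ hg => simp [hg]
          exact this
    _ = A.card ^ Fintype.card b := by simp
    _ ≤ A.card ^ k := Nat.pow_le_pow_right hA.card_pos hcard

/-- A matrix is determined by one column together with the remaining ones. -/
lemma eq_of_column_eq {F : Type} {e : ℕ} {M N : Matrix (Fin e) (Fin (e + 1)) F} (i : Fin (e + 1))
    (hP : M.submatrix id i.succAbove = N.submatrix id i.succAbove)
    (hc : ∀ r, M r i = N r i) : M = N := by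
  ext r j
  rcases Fin.eq_self_or_eq_succAbove i j with rfl | ⟨j, rfl⟩
  · exact hc r
  · exact congrFun (congrFun hP r) j

/-- Once the submatrices omitting column `i` are fixed, a pair with common vector of minors,
nonzero at `i`, is determined by column `i` of its first member. -/
lemma pair_determined {F : Type} [Field F] {e : ℕ} {M M' N N' : Matrix (Fin e) (Fin (e + 1)) F}
    (i : Fin (e + 1)) (hM : vmat M = vmat M') (hN : vmat N = vmat N') (hi : vmat M i ≠ 0)
    (hP : M.submatrix id i.succAbove = N.submatrix id i.succAbove)
    (hP' : M'.submatrix id i.succAbove = N'.submatrix id i.succAbove)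
    (hc : ∀ r, M r i = N r i) : M = N ∧ M' = N' := by
  have hMN : M = N := eq_of_column_eq i hP hc
  refine ⟨hMN, eq_of_column_eq i hP' fun r => ?_⟩
  have h1 := column_relation M' i r
  have h2 := column_relation N' i r
  rw [← hM] at h1
  rw [← hN, ← hMN] at h2
  have h3 : ∀ j, M' r (i.succAbove j) = N' r (i.succAbove j) :=
    fun j => congrFun (congrFun hP' r) j
  simp only [h3] at h1
  exact mul_left_cancel₀ hi (add_right_cancel (h1.trans h2.symm))

/-- If `i` is the first nonzero coordinate of `vmat M`, then column `i` of `M` lies in the span of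
the later columns, which are the columns `j ≥ i` of the submatrix `P` omitting column `i`. -/
lemma column_mem_span {F : Type} [Field F] [DecidableEq F] {e : ℕ}
    (M : Matrix (Fin e) (Fin (e + 1)) F) (P : Matrix (Fin e) (Fin e) F)
    (i : Fin (e + 1)) (hP : M.submatrix id i.succAbove = P)
    (hi : vmat M i ≠ 0) (hlt : ∀ j < i, vmat M j = 0) :
    (fun r => M r i) ∈ Submodule.span F (((Finset.univ.filter (fun j : Fin e => i ≤ j.castSucc)).image
      (fun j r => P r j) : Finset (Fin e → F)) : Set (Fin e → F)) := by
  have hc : (fun r => M r i) =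
      ∑ j, (-(vmat M i)⁻¹ * vmat M (i.succAbove j)) • (fun r => P r j) := by
    funext r
    have h := column_relation M i r
    have hPr : ∀ j, P r j = M r (i.succAbove j) := fun j => by rw [← hP]; rfl
    simp only [Finset.sum_apply, Pi.smul_apply, smul_eq_mul, hPr, mul_assoc, ← Finset.mul_sum]
    rw [eq_neg_of_add_eq_zero_right h]
    field_simp
  rw [hc]
  refine Submodule.sum_mem _ fun j _ => ?_
  by_cases hj : i ≤ j.castSucc
  · refine Submodule.smul_mem _ _ (Submodule.subset_span ?_)
    simp only [Finset.coe_image, Finset.coe_filter, Finset.mem_univ, true_and]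
    exact ⟨j, hj, rfl⟩
  · have hj := not_le.mp hj
    rw [Fin.succAbove_of_castSucc_lt _ _ hj, hlt _ hj]
    simp

lemma card_later_le {e : ℕ} (i : Fin (e + 1)) :
    (Finset.univ.filter (fun j : Fin e => i ≤ j.castSucc)).card ≤ e - i := by
  rw [← Nat.card_Ico (i : ℕ) e]
  refine Finset.card_le_card_of_injOn (fun j => (j : ℕ)) ?_ (fun a _ b _ h => Fin.ext h)
  intro j hj
  simpa [Fin.le_def] using hj

open Classical in
/-- The set of matrices with all entries in `A`. -/
noncomputable def entriesIn {F : Type} [Fintype F] (m n : ℕ) (A : Finset F) :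
    Finset (Matrix (Fin m) (Fin n) F) :=
  Finset.univ.filter (fun M => ∀ i j, M i j ∈ A)

/-- Bounds the pairs whose common vector of minors has its first nonzero coordinate at `i`, through
the fibres of the map deleting column `i` from both matrices. -/
lemma card_stratum_le {F : Type} [Field F] [Fintype F] [DecidableEq F] {e : ℕ}
    (A : Finset F) (hA : A.Nonempty) (i : Fin (e + 1)) :
    ((entriesIn e (e + 1) A ×ˢ entriesIn e (e + 1) A).filter (fun p =>
      vmat p.1 = vmat p.2 ∧ vmat p.1 i ≠ 0 ∧ ∀ j < i, vmat p.1 j = 0)).card ≤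
    A.card ^ (e - i) * ((entriesIn e e A ×ˢ entriesIn e e A).filter (fun p =>
      p.1.det = p.2.det ∧ p.1.det ≠ 0)).card := by
  refine Finset.card_le_mul_card_image_of_maps_to
    (f := fun p => (p.1.submatrix id i.succAbove, p.2.submatrix id i.succAbove)) ?_ _ ?_
  · rintro ⟨M, M'⟩ h
    simp only [entriesIn, Finset.mem_filter, Finset.mem_product, Finset.mem_univ,
      true_and] at h ⊢
    obtain ⟨⟨hM, hM'⟩, hv, hi, -⟩ := h
    have h2 := congrFun hv i
    simp only [vmat] at h2 hi
    exact ⟨⟨fun r j => hM _ _, fun r j => hM' _ _⟩,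
      mul_left_cancel₀ (left_ne_zero_of_mul hi) h2, right_ne_zero_of_mul hi⟩
  · rintro ⟨P, P'⟩ -
    rw [← Finset.card_image_of_injOn (f := fun p => fun r => p.1 r i)]
    · refine card_filter_mem_le A hA (Submodule.span F
        (((Finset.univ.filter (fun j : Fin e => i ≤ j.castSucc)).image
          (fun j r => P r j) : Finset (Fin e → F)) : Set (Fin e → F))) ?_ _ ?_
      · exact (finrank_span_finset_le_card _).trans
          (Finset.card_image_le.trans (card_later_le i))
      · intro w hw
        obtain ⟨⟨M, M'⟩, h, rfl⟩ := Finset.mem_image.mp hw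
        simp only [entriesIn, Finset.mem_filter, Finset.mem_product, Finset.mem_univ,
          true_and, Prod.mk.injEq] at h
        obtain ⟨⟨⟨hM, -⟩, -, hi, hlt⟩, hP, -⟩ := h
        exact ⟨column_mem_span M P i hP hi hlt, fun r => hM r i⟩
    · rintro ⟨M, M'⟩ h ⟨N, N'⟩ h' heq
      simp only [Finset.coe_filter, Finset.mem_filter, Set.mem_ofPred_eq, Prod.mk.injEq] at h h'
      obtain ⟨⟨-, hM, hi, -⟩, hP, hP'⟩ := h
      obtain ⟨⟨-, hN, -, -⟩, hQ, hQ'⟩ := h'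
      obtain ⟨h1, h2⟩ := pair_determined i hM hN hi (hP.trans hQ.symm) (hP'.trans hQ'.symm)
        (fun r => congrFun heq r)
      rw [h1, h2]

/-- Statement 6, with `d = e + 1 ≥ 2`. -/
theorem stmt_6 (F : Type) [Field F] [Fintype F] [DecidableEq F]
    (hq : Odd (Fintype.card F)) (e : ℕ) (he : 1 ≤ e) (A : Finset F) :
    ∑ x ∈ Finset.univ.filter (fun x : Fin (e + 1) → F => x ≠ 0), gcount F e A x ^ 2 ≤
      (∑ j ∈ Finset.range (e + 1), A.card ^ j) *
        ∑ l ∈ Finset.univ.filter (fun l : F => l ≠ 0), matCount F e A l ^ 2 := by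
  have hg : ∀ x, gcount F e A x =
      ((entriesIn e (e + 1) A).filter (fun M => vmat M = x)).card := by
    intro x
    exact Nat.subtype_card _ fun M => by simp [entriesIn]
  have hm : ∀ l, matCount F e A l = ((entriesIn e e A).filter (fun M => M.det = l)).card := by
    intro x
    exact Nat.subtype_card _ fun M => by simp [entriesIn]
  simp only [hg, hm]
  rw [sum_card_fiber_sq, sum_card_fiber_sq]
  rcases A.eq_empty_or_nonempty with rfl | hA
  -- As `e ≥ 1`, no matrix has all its entries in the empty set.
  · have : entriesIn e (e + 1) (∅ : Finset F) = ∅ := by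
      refine Finset.eq_empty_of_forall_notMem fun M h => ?_
      simp only [entriesIn, Finset.mem_filter] at h
      exact absurd (h.2 ⟨0, he⟩ 0) (Finset.notMem_empty _)
    rw [this]
    simp
  rw [← Finset.sum_range_reflect, Finset.sum_mul,
    Finset.sum_range (fun j => A.card ^ (e + 1 - 1 - j) * _)]
  refine le_trans (Finset.card_le_card ?_) (Finset.card_biUnion_le.trans
    (Finset.sum_le_sum fun i _ => card_stratum_le A hA i))
  rintro ⟨M, M'⟩ h
  simp only [Finset.mem_filter, Finset.mem_biUnion, Finset.mem_univ, true_and] at h ⊢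
  obtain ⟨hM, hv, h0⟩ := h
  obtain ⟨i, hi, hmin⟩ := WellFounded.has_min (wellFounded_lt (α := Fin (e + 1)))
    {i | vmat M i ≠ 0} (Function.ne_iff.mp h0)
  exact ⟨i, hM, hv, hi, fun j hj => by_contra fun hne => hmin j hne hj⟩
end
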